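/- For every positive integer k there exists a legal sequence σ of moves in the auxiliary game whose initial position and resulting position both equal the starting position P and which satisfies F(σ, i, 2) = k for every i with 1 ≤ i ≤ m. -/

import Mathlib

/-!
The auxiliary game of Shitov, "Chess God's number grows exponentially".

Fix `m ≥ 1`.  The graph `G` has cycle vertices `(0,t)` for `t ∈ ℤ/3m` and triangle
vertices `(i,j)` for `1 ≤ i ≤ m`, `j ∈ {1,2,3}`.  We use 0-based indices: the
triangle vertex `(i,j)` of the paper (with `1 ≤ i ≤ m`, `1 ≤ j ≤ 3`) is
`Vtx.tri ⟨i-1⟩ ⟨j-1⟩`, and its paired cycle vertex `(0, 3i+j-3)` is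
`Vtx.cycle (pairC ⟨i-1⟩ ⟨j-1⟩)` where `pairC i j = 3*i + j + 1 (mod 3m)`.
-/

namespace AuxGame

/-- What occupies a vertex: nothing, the chip, or a switch. -/
inductive Occ : Type
  | empty : Occ
  | chip : Occ
  | switch : Occ
deriving DecidableEq

/-- Vertices of the graph `G`: the big cycle of length `3m`, and `m` triangles. -/
inductive Vtx (m : ℕ) : Type
  | cycle : ZMod (3 * m) → Vtx m
  | tri : Fin m → ZMod 3 → Vtx m
deriving DecidableEq

/-- The cycle vertex paired with the triangle vertex `(i,j)` (0-based):
this is the vertex `(0, 3i+j-3)` of the paper. -/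
def pairC {m : ℕ} (i : Fin m) (j : ZMod 3) : ZMod (3 * m) :=
  ((3 * i.val + j.val + 1 : ℕ) : ZMod (3 * m))

/-- Adjacency in `G`: consecutive vertices of the big cycle, and distinct
vertices of one triangle. -/
def Adjacent {m : ℕ} : Vtx m → Vtx m → Prop
  | .cycle t, .cycle t' => t' = t + 1 ∨ t' = t - 1
  | .tri i j, .tri i' j' => i = i' ∧ j ≠ j'
  | _, _ => False

/-- `u` and `v` form a pair `{(i,j), (0,3i+j-3)}` (in either order). -/
def IsPair {m : ℕ} : Vtx m → Vtx m → Prop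
  | .tri i j, .cycle t => t = pairC i j
  | .cycle t, .tri i j => t = pairC i j
  | _, _ => False

/-- A position of the auxiliary game: every vertex is empty, or carries the chip,
or carries (exactly) one switch; there is exactly one chip; and for every pair
`{(i,j), (0,3i+j-3)}` at least one of the two vertices carries a switch. -/
structure Pos (m : ℕ) where
  occ : Vtx m → Occ
  chip_exists_unique : ∃! v : Vtx m, occ v = Occ.chip
  switch_pair : ∀ (i : Fin m) (j : ZMod 3),
    occ (Vtx.tri i j) = Occ.switch ∨ occ (Vtx.cycle (pairC i j)) = Occ.switch

/-- A single move: the chip moves from vertex `from'` to vertex `to'`,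
transforming position `src` into position `dst`. -/
structure Move (m : ℕ) where
  src : Pos m
  dst : Pos m
  from' : Vtx m
  to' : Vtx m

/-- Legality of a single move: either a *jump* (the chip moves to an adjacent
vacant vertex of its triangle, or to an adjacent vacant vertex of the cycle),
or a *swap* (the chip, standing on one vertex of a pair, is exchanged with the
switch on the other vertex of that pair).  In both cases the destination gets
the chip, the source gets whatever was at the destination (nothing for a jump,
the switch for a swap), and all other vertices are unchanged. -/
def Move.Legal {m : ℕ} (mv : Move m) : Prop :=
  mv.src.occ mv.from' = Occ.chip ∧
  ((Adjacent mv.from' mv.to' ∧ mv.src.occ mv.to' = Occ.empty) ∨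
    (IsPair mv.from' mv.to' ∧ mv.src.occ mv.to' = Occ.switch)) ∧
  mv.dst.occ mv.to' = Occ.chip ∧
  mv.dst.occ mv.from' = mv.src.occ mv.to' ∧
  ∀ w : Vtx m, w ≠ mv.from' → w ≠ mv.to' → mv.dst.occ w = mv.src.occ w

/-- `Leads σ A B`: `σ` is a legal sequence of moves with initial position `A`
and resulting position `B` (each move is legal, and the resulting position of
each move is the initial position of the next one). -/
inductive Leads {m : ℕ} : List (Move m) → Pos m → Pos m → Prop
  | nil (A : Pos m) : Leads [] A A
  | cons (mv : Move m) (σ : List (Move m)) (B : Pos m) :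
      mv.Legal → Leads σ mv.dst B → Leads (mv :: σ) mv.src B

/-- `σ` is a legal sequence of moves. -/
def LegalSeq {m : ℕ} (σ : List (Move m)) : Prop :=
  ∃ A B : Pos m, Leads σ A B

/-- `#(σ, u, v)`: the number of single moves in `σ` carrying the chip from
vertex `u` to vertex `v` (used with `u`, `v` in one component, where such moves
are exactly jumps). -/
def jmpCount {m : ℕ} (σ : List (Move m)) (u v : Vtx m) : ℕ :=
  (σ.filter fun mv => decide (mv.from' = u ∧ mv.to' = v)).length

/-- The successor of a vertex in its own component: `(0,t) ↦ (0,t+1)` and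
`(i,j) ↦ (i,j+1 mod 3)`. -/
def nxt {m : ℕ} : Vtx m → Vtx m
  | .cycle t => .cycle (t + 1)
  | .tri i j => .tri i (j + 1)

/-- The predecessor of a vertex in its own component. -/
def prv {m : ℕ} : Vtx m → Vtx m
  | .cycle t => .cycle (t - 1)
  | .tri i j => .tri i (j - 1)

/-- Twice the flow through a vertex `v = (i₀,j₀)`:
`#(σ,i₀,j₀-1,j₀) + #(σ,i₀,j₀,j₀+1) - #(σ,i₀,j₀+1,j₀) - #(σ,i₀,j₀,j₀-1)` as an integer. -/
def dflow {m : ℕ} (σ : List (Move m)) (v : Vtx m) : ℤ :=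
  (jmpCount σ (prv v) v : ℤ) + (jmpCount σ v (nxt v) : ℤ)
    - (jmpCount σ (nxt v) v : ℤ) - (jmpCount σ v (prv v) : ℤ)

/-- The flow `F(σ, i₀, j₀)` through the vertex `v = (i₀,j₀)`. -/
def flow {m : ℕ} (σ : List (Move m)) (v : Vtx m) : ℚ :=
  (dflow σ v : ℚ) / 2

/-- `P` is the starting position: switches on `(i,1)`, `(i,3)`, `(0,3i-1)`
(0-based: `tri i 0`, `tri i 2`, `cycle (pairC i 1)`), the chip on some cycle
vertex not of the form `(0,3i-1)`, and all other vertices empty. -/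
def IsStarting {m : ℕ} (P : Pos m) : Prop :=
  (∀ i : Fin m,
    P.occ (Vtx.tri i 0) = Occ.switch ∧
    P.occ (Vtx.tri i 1) = Occ.empty ∧
    P.occ (Vtx.tri i 2) = Occ.switch ∧
    P.occ (Vtx.cycle (pairC i 1)) = Occ.switch) ∧
  ∃ t : ZMod (3 * m),
    (∀ i : Fin m, t ≠ pairC i 1) ∧
    P.occ (Vtx.cycle t) = Occ.chip ∧
    ∀ s : ZMod (3 * m), s ≠ t → (∀ i : Fin m, s ≠ pairC i 1) →
      P.occ (Vtx.cycle s) = Occ.empty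

end AuxGame

namespace AuxGame

theorem pairC_inj {m : ℕ} {i i' : Fin m} {j j' : ZMod 3} (h : pairC i j = pairC i' j') :
    i = i' ∧ j = j' := by
  unfold pairC at h
  rw [ZMod.natCast_eq_natCast_iff] at h
  have h2 : 3 * i.val + j.val ≡ 3 * i'.val + j'.val [MOD 3 * m] :=
    Nat.ModEq.add_right_cancel' 1 h
  have hj := ZMod.val_lt j
  have hj' := ZMod.val_lt j'
  have hi := i.isLt
  have hi' := i'.isLt
  have h3 := Nat.ModEq.eq_of_lt_of_lt h2 (by omega) (by omega)
  refine ⟨Fin.ext (by omega), ZMod.val_injective 3 (by omega)⟩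

theorem pairC_bij {m : ℕ} [NeZero m] :
    Function.Bijective (fun p : Fin m × ZMod 3 => pairC p.1 p.2) := by
  haveI : NeZero (3 * m) := ⟨by have := NeZero.ne m; omega⟩
  rw [Fintype.bijective_iff_injective_and_card]
  constructor
  · rintro ⟨i, j⟩ ⟨i', j'⟩ h
    obtain ⟨h1, h2⟩ := pairC_inj h
    exact Prod.ext h1 h2
  · simp [ZMod.card]; ring

noncomputable def eqv (m : ℕ) [NeZero m] : Fin m × ZMod 3 ≃ ZMod (3 * m) :=
  Equiv.ofBijective _ pairC_bij

theorem eqv_symm {m : ℕ} [NeZero m] (i : Fin m) (j : ZMod 3) :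
    (eqv m).symm (pairC i j) = (i, j) := by
  rw [Equiv.symm_apply_eq]; rfl

theorem exists_pair {m : ℕ} [NeZero m] (t : ZMod (3 * m)) : ∃ i j, t = pairC (m := m) i j := by
  obtain ⟨⟨i, j⟩, h⟩ := pairC_bij.2 t
  exact ⟨i, j, h.symm⟩

noncomputable def occF {m : ℕ} [NeZero m] (b : Fin m × ZMod 3 → Bool) (c : Fin m × ZMod 3) :
    Vtx m → Occ
  | .cycle t => if b ((eqv m).symm t) then (if (eqv m).symm t = c then .chip else .empty)
      else .switch
  | .tri i j => if b (i, j) then .switch else if (i, j) = c then .chip else .empty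

theorem occF_cycle {m : ℕ} [NeZero m] (b : Fin m × ZMod 3 → Bool) (c : Fin m × ZMod 3) (i j) :
    occF b c (.cycle (pairC i j)) = if b (i, j) then (if (i, j) = c then .chip else .empty)
      else .switch := by
  simp [occF, eqv_symm]

theorem occF_tri {m : ℕ} [NeZero m] (b : Fin m × ZMod 3 → Bool) (c : Fin m × ZMod 3) (i j) :
    occF b c (.tri i j) = if b (i, j) then .switch else if (i, j) = c then .chip else .empty := rfl

def lvl {m : ℕ} (x : Bool) (c : Fin m × ZMod 3) : Vtx m :=
  if x then .cycle (pairC c.1 c.2) else .tri c.1 c.2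

theorem vtx_cases {m : ℕ} [NeZero m] (v : Vtx m) :
    ∃ i j, v = .cycle (pairC i j) ∨ v = .tri i j := by
  cases v with
  | cycle t => obtain ⟨i, j, h⟩ := exists_pair t; exact ⟨i, j, Or.inl (by rw [h])⟩
  | tri i j => exact ⟨i, j, Or.inr rfl⟩

noncomputable def mk {m : ℕ} [NeZero m] (b : Fin m × ZMod 3 → Bool) (c : Fin m × ZMod 3) :
    Pos m where
  occ := occF b c
  chip_exists_unique := by
    refine ⟨lvl (b c) c, ?_, ?_⟩
    · obtain ⟨i, j⟩ := c
      cases h : b (i, j) <;> simp [lvl, occF_cycle, occF_tri, h]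
    · intro v hv
      obtain ⟨i, j, rfl | rfl⟩ := vtx_cases v
      · simp only [occF_cycle] at hv
        split_ifs at hv with h1 h2
        subst h2; simp [lvl, h1]
      · simp only [occF_tri] at hv
        split_ifs at hv with h1 h2
        subst h2; simp [lvl, h1]
  switch_pair i j := by
    cases h : b (i, j) <;> simp [occF_cycle, occF_tri, h]

theorem pos_ext {m : ℕ} {A B : Pos m} (h : A.occ = B.occ) : A = B := by
  cases A; cases B; cases h; rfl

def Reach {m : ℕ} (A B : Pos m) (f : Fin m → ℤ) : Prop :=
  ∃ σ : List (Move m), Leads σ A B ∧ ∀ i, dflow σ (Vtx.tri i 1) = f i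

theorem Leads.append {m : ℕ} {σ τ : List (Move m)} {A B C : Pos m} (h : Leads σ A B)
    (h' : Leads τ B C) : Leads (σ ++ τ) A C := by
  induction h with
  | nil A => exact h'
  | cons mv σ B hl _ ih => exact Leads.cons mv _ _ hl (ih h')

theorem dflow_append {m : ℕ} (σ τ : List (Move m)) (v : Vtx m) :
    dflow (σ ++ τ) v = dflow σ v + dflow τ v := by
  simp only [dflow, jmpCount, List.filter_append, List.length_append]
  push_cast
  ring

theorem Reach.refl {m : ℕ} (A : Pos m) : Reach A A 0 :=
  ⟨[], Leads.nil A, fun i => by simp [dflow, jmpCount]⟩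

theorem Reach.trans {m : ℕ} {A B C : Pos m} {f g : Fin m → ℤ} (h : Reach A B f)
    (h' : Reach B C g) : Reach A C (f + g) := by
  obtain ⟨σ, h1, h2⟩ := h
  obtain ⟨τ, h3, h4⟩ := h'
  exact ⟨σ ++ τ, h1.append h3, fun i => by simp [dflow_append, h2, h4]⟩

theorem Reach.single {m : ℕ} (mv : Move m) (h : mv.Legal) :
    Reach mv.src mv.dst (fun i => dflow [mv] (Vtx.tri i 1)) :=
  ⟨[mv], Leads.cons mv [] _ h (Leads.nil _), fun _ => rfl⟩

theorem cyc_inj {m : ℕ} {i i' : Fin m} {j j' : ZMod 3} :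
    pairC i j = pairC i' j' ↔ i = i' ∧ j = j' :=
  ⟨pairC_inj, by rintro ⟨rfl, rfl⟩; rfl⟩

theorem reach_toggle {m : ℕ} [NeZero m] {b b' : Fin m × ZMod 3 → Bool} {c : Fin m × ZMod 3}
    (h : b' c = !b c) (h' : ∀ d, d ≠ c → b' d = b d) : Reach (mk b c) (mk b' c) 0 := by
  obtain ⟨i, j⟩ := c
  have := Reach.single (m := m)
    ⟨mk b (i, j), mk b' (i, j), lvl (b (i, j)) (i, j), lvl (!b (i, j)) (i, j)⟩ ?_
  · convert this using 1
    funext a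
    cases hb : b (i, j) <;> simp [dflow, jmpCount, lvl, nxt, prv, List.filter_cons]
  · refine ⟨?_, Or.inr ⟨?_, ?_⟩, ?_, ?_, ?_⟩
    · cases hb : b (i, j) <;> simp [mk, lvl, occF_cycle, occF_tri, hb]
    · cases hb : b (i, j) <;> simp [lvl, IsPair]
    · cases hb : b (i, j) <;> simp [mk, lvl, occF_cycle, occF_tri, hb]
    · cases hb : b (i, j) <;> simp [mk, lvl, occF_cycle, occF_tri, hb, h]
    · cases hb : b (i, j) <;> simp [mk, lvl, occF_cycle, occF_tri, hb, h]
    · intro w hw hw'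
      have hd : ∀ p q, ((p, q) : Fin m × ZMod 3) ≠ (i, j) → b' (p, q) = b (p, q) :=
        fun p q => h' (p, q)
      obtain ⟨p, q, rfl | rfl⟩ := vtx_cases w
      · have : (p, q) ≠ (i, j) := by
          rintro ⟨⟩
          cases hb : b (i, j) <;> simp [lvl, hb] at hw hw'
        simp [mk, occF_cycle, hd _ _ this]
      · have : (p, q) ≠ (i, j) := by
          rintro ⟨⟩
          cases hb : b (i, j) <;> simp [lvl, hb] at hw hw'
        simp [mk, occF_tri, hd _ _ this]

theorem reach_jumpC {m : ℕ} [NeZero m] {b : Fin m × ZMod 3 → Bool} {i i' : Fin m} {j j' : ZMod 3}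
    (h : b (i, j) = true) (h' : b (i', j') = true) (hne : (i, j) ≠ (i', j'))
    (ha : pairC i' j' = pairC i j + 1 ∨ pairC i' j' = pairC i j - 1) :
    Reach (mk b (i, j)) (mk b (i', j')) 0 := by
  have := Reach.single (m := m)
    ⟨mk b (i, j), mk b (i', j'), .cycle (pairC i j), .cycle (pairC i' j')⟩ ?_
  · convert this using 1
    funext a
    simp [dflow, jmpCount, nxt, prv, List.filter_cons]
  · refine ⟨?_, Or.inl ⟨ha, ?_⟩, ?_, ?_, ?_⟩
    · simp [mk, occF_cycle, h]
    · simp only [mk, occF_cycle, h']; simp [hne.symm]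
    · simp [mk, occF_cycle, h']
    · simp only [mk, occF_cycle, h, h']; simp [hne, hne.symm]
    · intro w hw hw'
      obtain ⟨p, q, rfl | rfl⟩ := vtx_cases w
      · simp only [ne_eq, Vtx.cycle.injEq, cyc_inj] at hw hw'
        simp [mk, occF_cycle, hw, hw']
      · have h1 : b (p, q) = false → (p, q) ≠ (i, j) := by rintro h1 h2; simp_all
        have h2 : b (p, q) = false → (p, q) ≠ (i', j') := by rintro h1 h2; simp_all
        cases hb : b (p, q)
        · simp only [mk, occF_tri, hb, h1 hb, h2 hb]
        · simp [mk, occF_tri, hb]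

theorem reach_jumpT {m : ℕ} [NeZero m] {b : Fin m × ZMod 3 → Bool} {i : Fin m} {j j' : ZMod 3}
    (h : b (i, j) = false) (h' : b (i, j') = false) (hne : j ≠ j') :
    Reach (mk b (i, j)) (mk b (i, j'))
      (Pi.single i (if (j = 0 ∧ j' = 1) ∨ (j = 1 ∧ j' = 2) then 1 else
        if (j = 2 ∧ j' = 1) ∨ (j = 1 ∧ j' = 0) then -1 else 0)) := by
  have := Reach.single (m := m)
    ⟨mk b (i, j), mk b (i, j'), .tri i j, .tri i j'⟩ ?_
  · convert this using 1
    funext a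
    by_cases ha : a = i
    · subst ha
      simp only [dflow, jmpCount, nxt, prv, List.filter_cons, Pi.single_eq_same, Vtx.tri.injEq,
        true_and, List.filter_nil]
      clear this h h'
      have e : ∀ (p : Prop) [Decidable p] (x : Move m),
          ((if decide p = true then [x] else []).length : ℤ) = if p then 1 else 0 := by
        intro p _ x; by_cases hp : p <;> simp [hp]
      simp only [e]
      clear e
      revert j j'
      decide
    · have ha' : ¬ i = a := fun h => ha h.symm
      simp [dflow, jmpCount, nxt, prv, List.filter_cons, ha, ha']
  · refine ⟨?_, Or.inl ⟨⟨rfl, hne⟩, ?_⟩, ?_, ?_, ?_⟩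
    · simp [mk, occF_tri, h]
    · simp [mk, occF_tri, h', hne.symm]
    · simp [mk, occF_tri, h']
    · simp [mk, occF_tri, h, h', hne, hne.symm]
    · intro w hw hw'
      obtain ⟨p, q, rfl | rfl⟩ := vtx_cases w
      · have h1 : b (p, q) = true → (p, q) ≠ (i, j) := by rintro h1 h2; simp_all
        have h2 : b (p, q) = true → (p, q) ≠ (i, j') := by rintro h1 h2; simp_all
        cases hb : b (p, q)
        · simp [mk, occF_cycle, hb]
        · simp only [mk, occF_cycle, hb, h1 hb, h2 hb]
      · simp only [ne_eq, Vtx.tri.injEq] at hw hw'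
        simp [mk, occF_tri, hw, hw']

def bs {m : ℕ} (i : Fin m) (x y z : Bool) (p : Fin m × ZMod 3) : Bool :=
  if p.1 = i then (if p.2 = 0 then x else if p.2 = 1 then y else z) else decide (p.2 ≠ 1)

def b0 {m : ℕ} (p : Fin m × ZMod 3) : Bool := decide (p.2 ≠ 1)

theorem bs_eq {m : ℕ} (i : Fin m) : bs i true false true = b0 := by
  funext ⟨a, j⟩
  simp only [bs, b0]
  split_ifs <;> simp_all

theorem z10 : (1 : ZMod 3) ≠ 0 := by decide
theorem z20 : (2 : ZMod 3) ≠ 0 := by decide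
theorem z21 : (2 : ZMod 3) ≠ 1 := by decide

theorem tog0 {m : ℕ} [NeZero m] (i : Fin m) (x y z : Bool) :
    Reach (mk (bs i x y z) (i, 0)) (mk (bs i (!x) y z) (i, 0)) 0 := by
  apply reach_toggle
  · simp [bs]
  · rintro ⟨a, j⟩ h
    by_cases ha : a = i
    · subst ha
      have : j ≠ 0 := fun h' => h (by rw [h'])
      simp [bs, this]
    · simp [bs, ha]

theorem tog1 {m : ℕ} [NeZero m] (i : Fin m) (x y z : Bool) :
    Reach (mk (bs i x y z) (i, 1)) (mk (bs i x (!y) z) (i, 1)) 0 := by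
  apply reach_toggle
  · simp [bs, z10]
  · rintro ⟨a, j⟩ h
    by_cases ha : a = i
    · subst ha
      have : j ≠ 1 := fun h' => h (by rw [h'])
      simp [bs, this]
    · simp [bs, ha]

theorem tog2 {m : ℕ} [NeZero m] (i : Fin m) (x y z : Bool) :
    Reach (mk (bs i x y z) (i, 2)) (mk (bs i x y (!z)) (i, 2)) 0 := by
  apply reach_toggle
  · simp [bs, z20, z21]
  · rintro ⟨a, j⟩ h
    by_cases ha : a = i
    · subst ha
      have h2 : j ≠ 2 := fun h' => h (by rw [h'])
      have : j = 0 ∨ j = 1 := by clear h; revert j; decide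
      rcases this with rfl | rfl <;> simp [bs]
    · simp [bs, ha]

theorem pairC_01 {m : ℕ} (i : Fin m) : pairC i 1 = pairC i 0 + 1 := by
  have h1 : (1 : ZMod 3).val = 1 := rfl
  have h0 : (0 : ZMod 3).val = 0 := rfl
  simp only [pairC, h1, h0]; push_cast; ring

theorem pairC_12 {m : ℕ} (i : Fin m) : pairC i 2 = pairC i 1 + 1 := by
  have h1 : (1 : ZMod 3).val = 1 := rfl
  have h0 : (2 : ZMod 3).val = 2 := rfl
  simp only [pairC, h1, h0]; push_cast; ring

theorem pairC_20 {m : ℕ} [NeZero m] (i : Fin m) : pairC (i + 1) 0 = pairC i 2 + 1 := by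
  have h1 : (0 : ZMod 3).val = 0 := rfl
  have h0 : (2 : ZMod 3).val = 2 := rfl
  have hv : (i + 1 : Fin m).val = (i.val + 1) % m := by
    rw [Fin.val_add, Fin.val_one', Nat.add_mod_mod]
  have e : pairC i 2 + 1 = ((3 * (i.val + 1) + 0 + 1 : ℕ) : ZMod (3 * m)) := by
    simp only [pairC, h0]; push_cast; ring
  rw [e]
  unfold pairC
  rw [h1, hv, ZMod.natCast_eq_natCast_iff]
  apply Nat.ModEq.add_right
  apply Nat.ModEq.add_right
  exact Nat.ModEq.mul_left' 3 (Nat.mod_modEq _ _)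

theorem pass {m : ℕ} [NeZero m] (i : Fin m) :
    Reach (mk b0 (i, 0)) (mk b0 (i, 2)) (Pi.single i 2) := by
  rw [← bs_eq i]
  have s1 := tog0 i true false true
  have s2 := reach_jumpT (b := bs i false false true) (i := i) (j := 0) (j' := 1)
    (by simp [bs]) (by simp [bs]) (by decide)
  have s3 := tog1 i false false true
  have s4 := reach_jumpC (b := bs i false true true) (i := i) (i' := i) (j := 1) (j' := 2)
    (by simp [bs, z10]) (by simp [bs, z20, z21]) (by simpa using z21.symm) (Or.inl (pairC_12 i))
  have s5 := tog2 i false true true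
  have s6 := reach_jumpT (b := bs i false true false) (i := i) (j := 2) (j' := 0)
    (by simp [bs, z20, z21]) (by simp [bs]) (by decide)
  have s7 := tog0 i false true false
  have s8 := reach_jumpC (b := bs i true true false) (i := i) (i' := i) (j := 0) (j' := 1)
    (by simp [bs]) (by simp [bs, z10]) (by simp) (Or.inl (pairC_01 i))
  have s9 := tog1 i true true false
  have s10 := reach_jumpT (b := bs i true false false) (i := i) (j := 1) (j' := 2)
    (by simp [bs, z10]) (by simp [bs, z20]) (by decide)
  have s11 := tog2 i true false false
  have := ((((((((((s1.trans s2).trans s3).trans s4).trans s5).trans s6).trans s7).trans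
    s8).trans s9).trans s10).trans s11)
  change Reach _ (mk (bs i true false true) (i, 2)) _ at this
  convert this using 1
  funext a
  by_cases ha : a = i
  · subst ha
    simp [z20, z21]
  · simp [ha]

theorem hop {m : ℕ} [NeZero m] (i : Fin m) :
    Reach (mk b0 (i, 2)) (mk b0 (i + 1, 0)) 0 := by
  refine reach_jumpC (by simp [b0, z21]) (by simp [b0]) ?_ (Or.inl (pairC_20 i))
  intro h
  exact z20 (congrArg Prod.snd h)

theorem hop' {m : ℕ} [NeZero m] (i : Fin m) :
    Reach (mk b0 (i + 1, 0)) (mk b0 (i, 2)) 0 := by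
  refine reach_jumpC (by simp [b0]) (by simp [b0, z21]) ?_ (Or.inr (by rw [pairC_20]; ring))
  intro h
  exact z20 (congrArg Prod.snd h).symm

theorem run {m : ℕ} [NeZero m] (i : Fin m) (n : ℕ) :
    Reach (mk b0 (i, 0)) (mk b0 (i + Fin.ofNat m n, 0))
      (∑ l ∈ Finset.range n, Pi.single (i + Fin.ofNat m l) 2) := by
  induction n with
  | zero => simpa using Reach.refl _
  | succ n ih =>
    have := ih.trans ((pass (i + Fin.ofNat m n)).trans (hop _))
    rw [Finset.sum_range_succ]
    convert this using 1
    · congr 2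
      rw [add_assoc]
      congr 1
      apply Fin.ext
      simp [Fin.val_add]
    · simp

theorem loop1 {m : ℕ} [NeZero m] (i : Fin m) :
    Reach (mk b0 (i, 0)) (mk b0 (i, 0)) (fun _ => 2) := by
  have := run i m
  convert this using 1
  · congr 2
    have : Fin.ofNat m m = 0 := by apply Fin.ext; simp
    simp [this]
  · rw [Finset.sum_range (f := fun l => Pi.single (M := fun _ : Fin m => ℤ) (i + Fin.ofNat m l) 2)]
    have : ∀ l : Fin m, Fin.ofNat m (l : ℕ) = l := fun l => by
      apply Fin.ext; simp [Nat.mod_eq_of_lt l.isLt]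
    simp only [this]
    refine Eq.trans ?_ (Equiv.sum_comp (Equiv.addLeft i) (fun l : Fin m => Pi.single (M := fun _ : Fin m => ℤ) l 2)).symm
    funext a
    simp [Finset.sum_apply, Pi.single_apply]

theorem loopk {m : ℕ} [NeZero m] (i : Fin m) (k : ℕ) :
    Reach (mk b0 (i, 0)) (mk b0 (i, 0)) (fun _ => 2 * (k : ℤ)) := by
  induction k with
  | zero =>
    convert Reach.refl _ using 1
    funext a
    simp
  | succ n ih =>
    convert ih.trans (loop1 i) using 1
    funext a
    simp; ring

theorem start_eq {m : ℕ} [NeZero m] {P : Pos m} (hP : IsStarting P) :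
    ∃ i : Fin m, P = mk b0 (i, 0) ∨ P = mk b0 (i, 2) := by
  obtain ⟨h, t, ht, hc, he⟩ := hP
  obtain ⟨i, j, rfl⟩ := exists_pair t
  have hj : j ≠ 1 := fun hj => ht i (by rw [hj])
  have key : P = mk b0 (i, j) := by
    apply pos_ext
    funext v
    obtain ⟨p, q, rfl | rfl⟩ := vtx_cases v
    · by_cases hq : q = 1
      · subst hq
        rw [(h p).2.2.2]
        simp [mk, occF_cycle, b0]
      · by_cases hpq : (p, q) = (i, j)
        · cases hpq
          rw [hc]; simp [mk, occF_cycle, b0, hq]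
        · rw [he (pairC p q) (fun h => hpq (by obtain ⟨rfl, rfl⟩ := pairC_inj h; rfl))
            (fun i' h => hq (pairC_inj h).2)]
          simp only [mk, occF_cycle, b0, if_neg hpq]
          simp [hq]
    · have hq : q = 0 ∨ q = 1 ∨ q = 2 := by clear * -; revert q; decide
      rcases hq with rfl | rfl | rfl
      · rw [(h p).1]; simp [mk, occF_tri, b0]
      · rw [(h p).2.1]; simp [mk, occF_tri, b0, hj.symm]
      · rw [(h p).2.2.1]; simp [mk, occF_tri, b0, z21]
  have hj2 : j = 0 ∨ j = 2 := by clear * - hj; revert j; decide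
  refine ⟨i, ?_⟩
  rcases hj2 with rfl | rfl
  · exact Or.inl key
  · exact Or.inr key

end AuxGame

open AuxGame in
/-- For every positive integer `k` there is a legal sequence
`σ` leading from the starting position `P` back to `P` with `F(σ, i, 2) = k`
for every `1 ≤ i ≤ m`. -/
theorem statement5 (m : ℕ) (hm : 1 ≤ m) (P : Pos m) (hP : IsStarting P)
    (k : ℕ) (hk : 1 ≤ k) :
    ∃ σ : List (Move m), Leads σ P P ∧
      ∀ i : Fin m, flow σ (Vtx.tri i 1) = (k : ℚ) := by
  haveI : NeZero m := ⟨by omega⟩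
  have key : Reach P P (fun _ => 2 * (k : ℤ)) := by
    obtain ⟨i, rfl | rfl⟩ := start_eq hP
    · exact loopk i k
    · simpa using ((hop i).trans (loopk (i + 1) k)).trans (hop' i)
  obtain ⟨σ, h1, h2⟩ := key
  refine ⟨σ, h1, fun i => ?_⟩
  rw [flow, h2]
  push_cast
  ring
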